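/- arXiv:2404.05404 — 2 statements merged into one kernel-verified Lean document; each statement's English description precedes it below -/
import Mathlib

section
/- Recursive feasibility across a mode switch (Theorem 1, Case 2): let C ⊆ S be control invariant for (A, B, U), let d ∈ ℕ, and suppose x₁ ∈ B^d_{A,B,U}(S, C). Then for every N ≥ d there exist inputs u : Fin N → (Fin nu → ℝ) with u i ∈ U and states x' : Fin (N+1) → (Fin nx → ℝ) with x' 0 = x₁ and x' (i+1) = A.mulVec (x' i) + B.mulVec (u i), such that x' i ∈ S for all 1 ≤ i ≤ d and x' i ∈ C for all d ≤ i ≤ N. -/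
open Matrix

/-- Backward reachable set of `I` within `S` for the system `x⁺ = A x + B u`, `u ∈ U`. -/
def brs {nx nu : ℕ} (A : Matrix (Fin nx) (Fin nx) ℝ) (B : Matrix (Fin nx) (Fin nu) ℝ)
    (U : Set (Fin nu → ℝ)) (S I : Set (Fin nx → ℝ)) : Set (Fin nx → ℝ) :=
  {x ∈ S | ∃ u ∈ U, A.mulVec x + B.mulVec u ∈ I}

/-- `i`-step backward reachable set. -/
def brsIter {nx nu : ℕ} (A : Matrix (Fin nx) (Fin nx) ℝ) (B : Matrix (Fin nx) (Fin nu) ℝ)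
    (U : Set (Fin nu → ℝ)) (S : Set (Fin nx → ℝ)) : ℕ → Set (Fin nx → ℝ) → Set (Fin nx → ℝ)
  | 0, I => I
  | i + 1, I => brs A B U S (brsIter A B U S i I)

/-- `C` is control invariant for the system `x⁺ = A x + B u`, `u ∈ U`. -/
def ctrlInv {nx nu : ℕ} (A : Matrix (Fin nx) (Fin nx) ℝ) (B : Matrix (Fin nx) (Fin nu) ℝ)
    (U : Set (Fin nu → ℝ)) (C : Set (Fin nx → ℝ)) : Prop :=
  ∀ x ∈ C, ∃ u ∈ U, A.mulVec x + B.mulVec u ∈ C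

theorem exists_trajectory_mem {X V : Type*} {f : X → V → X} {U : Set V} {T : ℕ → Set X}
    (hT : ∀ k, ∀ x ∈ T k, ∃ u ∈ U, f x u ∈ T (k + 1)) {x₀ : X} (hx₀ : x₀ ∈ T 0) :
    ∃ (u : ℕ → V) (x : ℕ → X), (∀ k, u k ∈ U) ∧ x 0 = x₀ ∧
      (∀ k, x (k + 1) = f (x k) (u k)) ∧ ∀ k, x k ∈ T k := by
  choose feedback feedback_mem next_mem using hT
  let x : (k : ℕ) → T k := Nat.rec ⟨x₀, hx₀⟩ fun k y ↦
    ⟨f y (feedback k y y.2), next_mem k y y.2⟩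
  exact ⟨fun k ↦ feedback k (x k).1 (x k).2, fun k ↦ (x k).1,
    fun k ↦ feedback_mem k (x k).1 (x k).2, rfl, fun _ ↦ rfl, fun k ↦ (x k).2⟩

section BackwardReachable

variable {nx nu : ℕ} {A : Matrix (Fin nx) (Fin nx) ℝ} {B : Matrix (Fin nx) (Fin nu) ℝ}
  {U : Set (Fin nu → ℝ)} {S C : Set (Fin nx → ℝ)}

theorem brsIter_subset_of_ne_zero {k : ℕ} (hk : k ≠ 0) (I : Set (Fin nx → ℝ)) :
    brsIter A B U S k I ⊆ S := by
  obtain ⟨j, rfl⟩ := Nat.exists_eq_succ_of_ne_zero hk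
  exact fun _ hx ↦ hx.1

theorem ctrlInv.exists_mem_brsIter_pred (hC : ctrlInv A B U C) {k : ℕ} {x : Fin nx → ℝ}
    (hx : x ∈ brsIter A B U S k C) :
    ∃ u ∈ U, A.mulVec x + B.mulVec u ∈ brsIter A B U S (k - 1) C := by
  cases k with
  | zero => exact hC x hx
  | succ k => exact hx.2

theorem recursive_feasibility_mode_switch_general (hC : ctrlInv A B U C) {d : ℕ}
    {x₁ : Fin nx → ℝ} (hx₁ : x₁ ∈ brsIter A B U S d C) :
    ∃ (u : ℕ → Fin nu → ℝ) (x : ℕ → Fin nx → ℝ), (∀ i, u i ∈ U) ∧ x 0 = x₁ ∧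
      (∀ i, x (i + 1) = A.mulVec (x i) + B.mulVec (u i)) ∧
      (∀ i < d, x i ∈ S) ∧ ∀ i, d ≤ i → x i ∈ C := by
  -- The tube `brsIter A B U S (d - i) C` stays at `C` once `d ≤ i`, as `d - i` truncates to `0`.
  obtain ⟨u, x, hu, hx_zero, hx_succ, hx_mem⟩ :=
    exists_trajectory_mem (f := fun x u ↦ A.mulVec x + B.mulVec u)
      (T := fun i ↦ brsIter A B U S (d - i) C) (fun _ _ ↦ hC.exists_mem_brsIter_pred) hx₁
  refine ⟨u, x, hu, hx_zero, hx_succ, fun i hi ↦ ?_, fun i hi ↦ ?_⟩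
  · exact brsIter_subset_of_ne_zero (Nat.sub_ne_zero_of_lt hi) C (hx_mem i)
  · simpa only [Nat.sub_eq_zero_of_le hi, brsIter] using hx_mem i

end BackwardReachable

theorem recursive_feasibility_mode_switch {nx nu : ℕ} (A : Matrix (Fin nx) (Fin nx) ℝ)
    (B : Matrix (Fin nx) (Fin nu) ℝ) (U : Set (Fin nu → ℝ)) (S C : Set (Fin nx → ℝ))
    (hC : ctrlInv A B U C) (hCS : C ⊆ S) (d : ℕ) (x₁ : Fin nx → ℝ)
    (hx₁ : x₁ ∈ brsIter A B U S d C) :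
    ∀ N : ℕ, d ≤ N →
      ∃ (u : Fin N → (Fin nu → ℝ)) (x' : Fin (N + 1) → (Fin nx → ℝ)),
        (∀ i : Fin N, u i ∈ U) ∧
        x' 0 = x₁ ∧
        (∀ i : Fin N, x' i.succ = A.mulVec (x' i.castSucc) + B.mulVec (u i)) ∧
        (∀ i : Fin (N + 1), 1 ≤ (i : ℕ) → (i : ℕ) ≤ d → x' i ∈ S) ∧
        (∀ i : Fin (N + 1), d ≤ (i : ℕ) → (i : ℕ) ≤ N → x' i ∈ C) := by
  intro N _
  obtain ⟨u, x, hu, hx_zero, hx_succ, hxS, hxC⟩ := recursive_feasibility_mode_switch_general hC hx₁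
  exact ⟨fun i ↦ u i, fun i ↦ x i, fun i ↦ hu i, hx_zero, fun i ↦ hx_succ i,
    fun i _ _ ↦ (Nat.lt_or_ge i d).elim (hxS i) (fun h ↦ hCS (hxC i h)), fun i hi _ ↦ hxC i hi⟩
end

section
/- One-step cost decrease of the shifted candidate solution (key inequality in the proof of Theorem 2): let A : Matrix (Fin n) (Fin n) ℝ, B : Matrix (Fin n) (Fin m) ℝ, K : Matrix (Fin m) (Fin n) ℝ, and symmetric matrices Q̄, P : Matrix (Fin n) (Fin n) ℝ, R : Matrix (Fin m) (Fin m) ℝ such that P − (A + B*K)ᵀ * P * (A + B*K) − Q̄ − Kᵀ*R*K is positive semidefinite. Let (x_s, u_s) be a steady pair, i.e. x_s = A.mulVec x_s + B.mulVec u_s. For N ≥ 1, let u : Fin N → (Fin m → ℝ) and x : Fin (N+1) → (Fin n → ℝ) satisfy x (i+1) = A.mulVec (x i) + B.mulVec (u i). Define the cost J(x, u) := ∑_{i < N} [ (x i − x_s) ⬝ᵥ (Q̄.mulVec (x i − x_s)) + (u i − u_s) ⬝ᵥ (R.mulVec (u i − u_s)) ] + (x N − x_s) ⬝ᵥ (P.mulVec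 (x N − x_s)). Define the shifted candidate by u' i := u (i+1) for i < N − 1 and u' (N−1) := u_s + K.mulVec (x N − x_s), with states x' 0 := x 1 and x' (i+1) := A.mulVec (x' i) + B.mulVec (u' i). Then J(x', u') ≤ J(x, u) − (x 0 − x_s) ⬝ᵥ (Q̄.mulVec (x 0 − x_s)) − (u 0 − u_s) ⬝ᵥ (R.mulVec (u 0 − u_s)). -/
open Matrix

/-!
Dropping the first stage of the old plan removes exactly its stage cost. The shifted candidate is
the remaining tail with one stage appended, and the terminal inequality says that appending a stage
under the terminal feedback does not increase the cost. In the linear-quadratic case the terminal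
feedback makes the deviation from the steady state evolve by `A + B * K`, so that the terminal
inequality is the assumed matrix inequality evaluated at the terminal deviation.
-/

section FiniteHorizon

variable {X U G : Type*} {N : ℕ} {f : X → U → X}

/-- `x` is a finite state trajectory of the discrete-time system `f` under the inputs `u`: there is
one more state than there are inputs, and the initial state is free. -/
def IsTrajectory (f : X → U → X) (x : Fin (N + 1) → X) (u : Fin N → U) : Prop :=
  ∀ i : Fin N, x i.succ = f (x i.castSucc) (u i)

namespace IsTrajectory

theorem tail {x : Fin (N + 2) → X} {u : Fin (N + 1) → U} (h : IsTrajectory f x u) :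
    IsTrajectory f (Fin.tail x) (Fin.tail u) :=
  fun i => h i.succ

theorem init {x : Fin (N + 2) → X} {u : Fin (N + 1) → U} (h : IsTrajectory f x u) :
    IsTrajectory f (Fin.init x) (Fin.init u) :=
  fun i => h i.castSucc

theorem eq_of_zero_eq {x y : Fin (N + 1) → X} {u : Fin N → U} (hx : IsTrajectory f x u)
    (hy : IsTrajectory f y u) (h₀ : x 0 = y 0) : x = y := by
  funext i
  induction i using Fin.induction with
  | zero => exact h₀
  | succ i ih => rw [hx i, hy i, ih]

end IsTrajectory

/-- The finite-horizon cost with stage cost `ℓ` and terminal cost `V`: every state but the last is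
charged a stage cost together with the input applied there, the last one the terminal cost. -/
def finiteHorizonCost [AddCommMonoid G] (ℓ : X → U → G) (V : X → G)
    (x : Fin (N + 1) → X) (u : Fin N → U) : G :=
  ∑ i : Fin N, ℓ (x i.castSucc) (u i) + V (x (Fin.last N))

theorem finiteHorizonCost_eq_add_tail [AddCommMonoid G] (ℓ : X → U → G) (V : X → G)
    (x : Fin (N + 2) → X) (u : Fin (N + 1) → U) :
    finiteHorizonCost ℓ V x u =
      ℓ (x 0) (u 0) + finiteHorizonCost ℓ V (Fin.tail x) (Fin.tail u) := by
  rw [finiteHorizonCost, Fin.sum_univ_succ, add_assoc]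
  rfl

theorem finiteHorizonCost_le_init [AddCommMonoid G] [Preorder G] [IsOrderedAddMonoid G]
    {ℓ : X → U → G} {V : X → G} {x : Fin (N + 2) → X} {u : Fin (N + 1) → U}
    (hV : ℓ (x (Fin.last N).castSucc) (u (Fin.last N)) + V (x (Fin.last (N + 1))) ≤
      V (x (Fin.last N).castSucc)) :
    finiteHorizonCost ℓ V x u ≤ finiteHorizonCost ℓ V (Fin.init x) (Fin.init u) := by
  rw [finiteHorizonCost, Fin.sum_univ_castSucc, add_assoc]
  exact add_le_add_right hV _

theorem shifted_candidate_cost_decrease_general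
    [AddCommGroup G] [Preorder G] [IsOrderedAddMonoid G] {ℓ : X → U → G} {V : X → G}
    (hN : 1 ≤ N) {u u' : Fin N → U} {x x' : Fin (N + 1) → X}
    (hx : IsTrajectory f x u) (hx' : IsTrajectory f x' u')
    (hu' : ∀ (i : Fin N) (h : (i : ℕ) + 1 < N), u' i = u ⟨(i : ℕ) + 1, h⟩)
    (hx'0 : x' 0 = x 1)
    (hV : ℓ (x (Fin.last N)) (u' ⟨N - 1, Nat.sub_one_lt_of_lt hN⟩) +
      V (f (x (Fin.last N)) (u' ⟨N - 1, Nat.sub_one_lt_of_lt hN⟩)) ≤ V (x (Fin.last N))) :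
    finiteHorizonCost ℓ V x' u' ≤ finiteHorizonCost ℓ V x u - ℓ (x 0) (u ⟨0, hN⟩) := by
  obtain ⟨M, rfl⟩ : ∃ M, N = M + 1 := Nat.exists_eq_add_of_le' hN
  have inputs_shift : Fin.init u' = Fin.tail u :=
    funext fun i => hu' i.castSucc (Nat.succ_lt_succ i.isLt)
  have states_shift : Fin.init x' = Fin.tail x :=
    hx'.init.eq_of_zero_eq (inputs_shift ▸ hx.tail) hx'0
  have terminal_state : x' (Fin.last M).castSucc = x (Fin.last (M + 1)) :=
    congrFun states_shift (Fin.last M)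
  calc finiteHorizonCost ℓ V x' u'
      ≤ finiteHorizonCost ℓ V (Fin.init x') (Fin.init u') := by
        apply finiteHorizonCost_le_init
        rw [← Fin.succ_last, hx' (Fin.last M), terminal_state]
        exact hV
    _ = finiteHorizonCost ℓ V (Fin.tail x) (Fin.tail u) := by rw [states_shift, inputs_shift]
    _ = finiteHorizonCost ℓ V x u - ℓ (x 0) (u 0) := by
        rw [finiteHorizonCost_eq_add_tail ℓ V x u, add_sub_cancel_left]

end FiniteHorizon

section LinearQuadratic

variable {ι κ S : Type*} [Fintype ι] [Fintype κ]

theorem dotProduct_transpose_mul_mul_mulVec [NonUnitalCommSemiring S] (C : Matrix κ ι S)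
    (M : Matrix κ κ S) (z : ι → S) :
    z ⬝ᵥ ((Cᵀ * M * C) *ᵥ z) = (C *ᵥ z) ⬝ᵥ (M *ᵥ (C *ᵥ z)) := by
  rw [← mulVec_mulVec, ← mulVec_mulVec, dotProduct_mulVec, vecMul_transpose]

theorem closedLoop_sub_steadyState [NonUnitalRing S] {A : Matrix ι ι S} {B : Matrix ι κ S}
    (K : Matrix κ ι S) {xs : ι → S} {us : κ → S} (hsteady : xs = A *ᵥ xs + B *ᵥ us)
    (x : ι → S) :
    A *ᵥ x + B *ᵥ (us + K *ᵥ (x - xs)) - xs = (A + B * K) *ᵥ (x - xs) := by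
  calc A *ᵥ x + B *ᵥ (us + K *ᵥ (x - xs)) - xs
      = A *ᵥ x + B *ᵥ (us + K *ᵥ (x - xs)) - (A *ᵥ xs + B *ᵥ us) := by rw [← hsteady]
    _ = A *ᵥ (x - xs) + B *ᵥ (K *ᵥ (x - xs)) := by
        rw [mulVec_add, mulVec_sub A]
        abel
    _ = (A + B * K) *ᵥ (x - xs) := by rw [add_mulVec, mulVec_mulVec]

theorem quadratic_terminalCost_decrease [NonUnitalCommRing S] [Preorder S] [IsOrderedAddMonoid S]
    {A : Matrix ι ι S} {B : Matrix ι κ S} {K : Matrix κ ι S} {Q P : Matrix ι ι S}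
    {R : Matrix κ κ S}
    (hP : ∀ z, 0 ≤ z ⬝ᵥ ((P - (A + B * K)ᵀ * P * (A + B * K) - Q - Kᵀ * R * K) *ᵥ z))
    {xs : ι → S} {us : κ → S} (hsteady : xs = A *ᵥ xs + B *ᵥ us)
    {x : ι → S} {u : κ → S} (hu : u = us + K *ᵥ (x - xs)) :
    (x - xs) ⬝ᵥ (Q *ᵥ (x - xs)) + (u - us) ⬝ᵥ (R *ᵥ (u - us)) +
        (A *ᵥ x + B *ᵥ u - xs) ⬝ᵥ (P *ᵥ (A *ᵥ x + B *ᵥ u - xs)) ≤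
      (x - xs) ⬝ᵥ (P *ᵥ (x - xs)) := by
  have h := hP (x - xs)
  simp only [sub_mulVec, dotProduct_sub, dotProduct_transpose_mul_mul_mulVec] at h
  rw [hu, closedLoop_sub_steadyState K hsteady, add_sub_cancel_left, ← sub_nonneg]
  convert h using 1
  abel

end LinearQuadratic

theorem shifted_candidate_cost_decrease {n m : ℕ}
    (A : Matrix (Fin n) (Fin n) ℝ) (B : Matrix (Fin n) (Fin m) ℝ)
    (K : Matrix (Fin m) (Fin n) ℝ)
    (Qm P : Matrix (Fin n) (Fin n) ℝ) (R : Matrix (Fin m) (Fin m) ℝ)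
    (hQsym : Qm.IsSymm) (hPsym : P.IsSymm) (hRsym : R.IsSymm)
    (hPSD : (P - (A + B * K)ᵀ * P * (A + B * K) - Qm - Kᵀ * R * K).PosSemidef)
    (xs : Fin n → ℝ) (us : Fin m → ℝ)
    (hsteady : xs = A.mulVec xs + B.mulVec us)
    (N : ℕ) (hN : 1 ≤ N)
    (u : Fin N → (Fin m → ℝ)) (x : Fin (N + 1) → (Fin n → ℝ))
    (hdyn : ∀ i : Fin N, x i.succ = A.mulVec (x i.castSucc) + B.mulVec (u i))
    (u' : Fin N → (Fin m → ℝ)) (x' : Fin (N + 1) → (Fin n → ℝ))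
    (hu' : ∀ (i : Fin N) (h : (i : ℕ) + 1 < N), u' i = u ⟨(i : ℕ) + 1, h⟩)
    (hu'last : u' ⟨N - 1, by omega⟩ = us + K.mulVec (x (Fin.last N) - xs))
    (hx'0 : x' 0 = x 1)
    (hdyn' : ∀ i : Fin N, x' i.succ = A.mulVec (x' i.castSucc) + B.mulVec (u' i)) :
    (∑ i : Fin N, ((x' i.castSucc - xs) ⬝ᵥ (Qm.mulVec (x' i.castSucc - xs)) +
        (u' i - us) ⬝ᵥ (R.mulVec (u' i - us)))) +
      (x' (Fin.last N) - xs) ⬝ᵥ (P.mulVec (x' (Fin.last N) - xs)) ≤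
    ((∑ i : Fin N, ((x i.castSucc - xs) ⬝ᵥ (Qm.mulVec (x i.castSucc - xs)) +
        (u i - us) ⬝ᵥ (R.mulVec (u i - us)))) +
      (x (Fin.last N) - xs) ⬝ᵥ (P.mulVec (x (Fin.last N) - xs)))
      - (x 0 - xs) ⬝ᵥ (Qm.mulVec (x 0 - xs))
      - (u ⟨0, by omega⟩ - us) ⬝ᵥ (R.mulVec (u ⟨0, by omega⟩ - us)) := by
  rw [sub_sub]
  exact shifted_candidate_cost_decrease_general (f := fun y v => A *ᵥ y + B *ᵥ v)
    (ℓ := fun y v => (y - xs) ⬝ᵥ (Qm *ᵥ (y - xs)) + (v - us) ⬝ᵥ (R *ᵥ (v - us)))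
    (V := fun y => (y - xs) ⬝ᵥ (P *ᵥ (y - xs))) hN hdyn hdyn' hu' hx'0
    (quadratic_terminalCost_decrease hPSD.dotProduct_mulVec_nonneg hsteady hu'last)
end
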